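/- Let α ∈ [0,1] be such that Shulga's algorithm applied to α takes infinitely many steps, and let q_n and t_n be the denominators of [0;b_1,…,b_n] and [0;c_1,…,c_n] respectively, where (b_n), (c_n) are the Shulga sequences of α. Then t_n/q_n → ∞ as n → ∞. -/

import Mathlib

/-!
Write `[0;b₁,…,bₙ] = pₙ/qₙ` and `[0;c₁,…,cₙ] = sₙ/tₙ`. The proof follows the rounding errors of
the algorithm. Let `φₙ ∈ (0,1)` and `ψₙ ∈ (0,1)` be the continued fraction tails with

  `α - pₙ/qₙ = [0;c₁,…,cₙ + φₙ]`,   `α - sₙ/tₙ = [0;b₁,…,bₙ + ψₙ]`,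

and put `θₙ₊₁ = bₙ₊₁ - 1/ψₙ ∈ (0,1]`. Computing the errors `|α - pₙ/qₙ - sₙ/tₙ|` and
`|α - pₙ₊₁/qₙ₊₁ - sₙ/tₙ|` in two ways each gives the exact identities

  `qₙ (qₙ₊₁ - θₙ₊₁ qₙ) φₙ = tₙ (tₙ + φₙ tₙ₋₁)`,
  `θₙ₊₁ tₙ (tₙ₊₁ + φₙ₊₁ tₙ) = qₙ₊₁ (qₙ₊₁ - θₙ₊₁ qₙ)`.

With `Rₙ = (tₙ + φₙ tₙ₋₁)/qₙ` and `Sₙ = (qₙ₊₁ - θₙ₊₁ qₙ)/tₙ` they read `Rₙ = φₙ Sₙ` and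
`Sₙ = θₙ₊₁ Rₙ₊₁`, so `R` is strictly increasing. Since `Rₙ ≤ 2 tₙ/qₙ`, it suffices that `R` is
unbounded (`tendsto_ratio_of_relations`).

Suppose `Rₙ → L < ∞`. Then `φₙ, θₙ → 1`, and the identities

  `bₙ₊₂ = Sₙ₊₁ Rₙ₊₁ - 1/θₙ₊₁ + θₙ₊₂`,   `cₙ₊₁ = Rₙ₊₁ Sₙ + 1/φₙ - φₙ₊₁`

show that `bₙ` and `cₙ` both converge to `L²`, hence are eventually equal to one integer `m`. The
defect `δₙ = L tₙ - qₙ₊₁ + qₙ` is positive for all `n`, because `Sₙ < L`, and eventually satisfies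
the same recurrence `xₙ₊₂ = m xₙ₊₁ + xₙ` as `tₙ`; therefore `δₙ ≥ κ tₙ` for some `κ > 0`. But
`δₙ = (L - Sₙ) tₙ + (1 - θₙ₊₁) qₙ = o(tₙ)`, a contradiction.

The existence of the tails is proved by induction (`invariant_succ`). The digits `c₁, …, cₙ`
persist in `α - pₙ₊₁/qₙ₊₁` for geometric reasons (`exists_c_tail`). That `b₁, …, bₙ` persist in
`α - sₙ/tₙ` amounts to `φₙ qₙ (qₙ + qₙ₋₁) < tₙ (tₙ + φₙ tₙ₋₁)` (`exists_b_tail`), which follows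
from `Sₙ² ≥ 2` for `n ≥ 1` (`cylinder_ineq_step`, and `cylinder_ineq_one` for the first step).
-/

noncomputable section

namespace ShulgaPaper

open Filter Topology

/-- The value of the finite continued fraction `[0; a₁, …, aₙ]`
(the empty continued fraction has value `0`). -/
def cf : List ℕ → ℝ
  | [] => 0
  | a :: l => 1 / ((a : ℝ) + cf l)

/-- Iterates of the Gauss map, starting from the fractional part of `x`. -/
def gaussIter (x : ℝ) : ℕ → ℝ
  | 0 => Int.fract x
  | n + 1 => Int.fract (1 / gaussIter x n)

/-- The `n`-th partial quotient `aₙ(x)` of the continued fraction expansion of `x`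
(for `n ≥ 1`; a junk value is returned if it is undefined). -/
def pq (x : ℝ) (n : ℕ) : ℕ := ⌊1 / gaussIter x (n - 1)⌋₊

/-- The `n`-th partial quotient `aₙ(x)` of `x` is defined (`n ≥ 1`), i.e. `n` does not
exceed the length of the continued fraction expansion of `x`. -/
def pqDefined (x : ℝ) (n : ℕ) : Prop := gaussIter x (n - 1) ≠ 0

/-- The set `G` of real numbers that are rational or whose partial quotients diverge. -/
def G : Set ℝ :=
  {x | (∃ q : ℚ, x = (q : ℝ)) ∨ Tendsto (fun n => pq x n) atTop atTop}

/-- The list of pairs `(b_k, c_k)`, `k = 1, …, n`, produced by (a totalized version of)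
Shulga's algorithm applied to `α`. -/
def shulgaList (α : ℝ) : ℕ → List (ℕ × ℕ)
  | 0 => []
  | n + 1 =>
      let L := shulgaList α n
      let b := pq (α - cf (L.map Prod.snd)) (n + 1) + 1
      let c := pq (α - cf (L.map Prod.fst ++ [b])) (n + 1)
      L ++ [(b, c)]

/-- The list `[b₁, …, bₙ]` of Shulga's algorithm applied to `α`. -/
def bList (α : ℝ) (n : ℕ) : List ℕ := (shulgaList α n).map Prod.fst

/-- The list `[c₁, …, cₙ]` of Shulga's algorithm applied to `α`. -/
def cList (α : ℝ) (n : ℕ) : List ℕ := (shulgaList α n).map Prod.snd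

/-- `bₙ` of Shulga's algorithm applied to `α` (for `n ≥ 1`). -/
def shulgaB (α : ℝ) (n : ℕ) : ℕ := ((shulgaList α n).getLast?.getD (0, 0)).1

/-- `cₙ` of Shulga's algorithm applied to `α` (for `n ≥ 1`). -/
def shulgaC (α : ℝ) (n : ℕ) : ℕ := ((shulgaList α n).getLast?.getD (0, 0)).2

/-- The first `n` steps of Shulga's algorithm applied to `α` are defined: for each step
`k + 1 ≤ n`, the partial quotients `a_{k+1}(α - [0;c₁,…,c_k])` and
`a_{k+1}(α - [0;b₁,…,b_{k+1}])` defining `b_{k+1}` and `c_{k+1}` exist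
(in particular the algorithm has not stopped before step `n`). -/
def shulgaDefined (α : ℝ) (n : ℕ) : Prop :=
  ∀ k < n, pqDefined (α - cf (cList α k)) (k + 1) ∧
    pqDefined (α - cf (bList α (k + 1))) (k + 1)

/-- The half-open interval whose included endpoint is `x` and excluded endpoint is `y`,
the smaller one being the left endpoint. -/
def hIco (x y : ℝ) : Set ℝ := if x ≤ y then Set.Ico x y else Set.Ioc y x

/-- The list `[a 1, …, a n]`. -/
def listOf (a : ℕ → ℕ) (n : ℕ) : List ℕ := (List.range n).map fun i => a (i + 1)

/-- The interval `B_k` determined by the digits `b`, `c` (`k ≥ 1`). -/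
def Bset (b c : ℕ → ℕ) (k : ℕ) : Set ℝ :=
  hIco (cf (listOf b (k - 1) ++ [b k - 1]) + cf (listOf c (k - 1)))
    (cf (listOf b k) + cf (listOf c (k - 1)))

/-- The interval `C_k` determined by the digits `b`, `c` (`k ≥ 1`). -/
def Cset (b c : ℕ → ℕ) (k : ℕ) : Set ℝ :=
  hIco (cf (listOf c k) + cf (listOf b k))
    (cf (listOf c (k - 1) ++ [c k + 1]) + cf (listOf b k))

/-- `A₀ = [0,1]` and `Aₙ = ⋂_{k=1}^{n} (B_k ∩ C_k)` for `n ≥ 1`. -/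
def Aset (b c : ℕ → ℕ) : ℕ → Set ℝ
  | 0 => Set.Icc 0 1
  | n + 1 => ⋂ k ∈ Finset.Icc 1 (n + 1), (Bset b c k ∩ Cset b c k)

/-- The denominators of the convergents of `[0; a 1, a 2, …]`:
`q₀ = 1`, `q₁ = a 1`, `q_k = a k * q_{k-1} + q_{k-2}`. -/
def qden (a : ℕ → ℕ) : ℕ → ℕ
  | 0 => 1
  | 1 => a 1
  | n + 2 => a (n + 2) * qden a (n + 1) + qden a n


/-! ### Growth of the quotient of denominators -/

/-- The purely metric half of the argument. Here `θ n` stands for `θₙ₊₁`, `hD` compares the two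
expressions of the error `|α - [0;b₁,…,bₙ] - [0;c₁,…,cₙ]|`, and `hE` the two expressions of
`|α - [0;b₁,…,bₙ₊₁] - [0;c₁,…,cₙ]|`. -/
lemma tendsto_ratio_of_relations (b c : ℕ → ℕ) (q q' t t' φ θ : ℕ → ℝ)
    (hq : ∀ n, 0 < q n) (hq1 : ∀ n, q' (n + 1) = q n)
    (hqr : ∀ n, q (n + 1) = b (n + 1) * q n + q' n)
    (ht : ∀ n, 0 < t n) (ht1 : ∀ n, t' (n + 1) = t n) (ht0 : ∀ n, 0 ≤ t' n)
    (htr : ∀ n, t (n + 1) = c (n + 1) * t n + t' n) (htt : ∀ n, t' n ≤ t n)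
    (hφ0 : ∀ n, 0 < φ n) (hφ1 : ∀ n, φ n < 1) (hθ0 : ∀ n, 0 < θ n) (hθ1 : ∀ n, θ n ≤ 1)
    (hD : ∀ n, q n * (q (n + 1) - θ n * q n) * φ n = t n * (t n + φ n * t' n))
    (hE : ∀ n, θ n * t n * (t (n + 1) + φ (n + 1) * t n)
      = q (n + 1) * (q (n + 1) - θ n * q n)) :
    Tendsto (fun n => t n / q n) atTop atTop := by
  obtain ⟨R, hR⟩ : ∃ R : ℕ → ℝ, ∀ n, R n = (t n + φ n * t' n) / q n := ⟨_, fun _ => rfl⟩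
  obtain ⟨S, hS⟩ : ∃ S : ℕ → ℝ, ∀ n, S n = (q (n + 1) - θ n * q n) / t n := ⟨_, fun _ => rfl⟩
  have hRq : ∀ n, R n * q n = t n + φ n * t' n := fun n => by
    rw [hR, div_mul_cancel₀ _ (hq n).ne']
  have hSt : ∀ n, S n * t n = q (n + 1) - θ n * q n := fun n => by
    rw [hS, div_mul_cancel₀ _ (ht n).ne']
  have hRS : ∀ n, S n * φ n = R n := fun n => by
    have h1 := hD n
    rw [← hRq, ← hSt] at h1
    have h2 : q n * t n ≠ 0 := mul_ne_zero (hq n).ne' (ht n).ne'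
    apply mul_left_cancel₀ h2
    linear_combination h1
  have hSR : ∀ n, R (n + 1) * θ n = S n := fun n => by
    have h1 := hE n
    have h3 := hRq (n + 1)
    rw [ht1] at h3
    rw [← h3, ← hSt] at h1
    have h2 : q (n + 1) * t n ≠ 0 := mul_ne_zero (hq _).ne' (ht n).ne'
    apply mul_left_cancel₀ h2
    linear_combination h1
  have hRpos : ∀ n, 0 < R n := fun n => by
    rw [hR]
    exact div_pos (add_pos_of_pos_of_nonneg (ht n) (mul_nonneg (hφ0 n).le (ht0 n))) (hq n)
  have hSpos : ∀ n, 0 < S n := fun n => by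
    rw [← hSR]; exact mul_pos (hRpos _) (hθ0 n)
  have hlt : ∀ n, R n < S n := fun n => by
    have := mul_lt_mul_of_pos_left (hφ1 n) (hSpos n)
    rw [hRS] at this; linarith
  have hle : ∀ n, S n ≤ R (n + 1) := fun n => by
    have := mul_le_mul_of_nonneg_left (hθ1 n) (hRpos (n + 1)).le
    rw [hSR] at this; linarith
  have hmono : StrictMono R := strictMono_nat_of_lt_succ fun n => (hlt n).trans_le (hle n)
  rcases tendsto_atTop_of_monotone hmono.monotone with hinf | ⟨L, hL⟩
  · -- `t' ≤ t` and `φ < 1` give `R ≤ 2 t / q`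
    refine tendsto_atTop_mono (f := fun n => R n / 2) (fun n => ?_)
      (hinf.atTop_div_const two_pos)
    have h1 := mul_le_mul (hφ1 n).le (htt n) (ht0 n) zero_le_one
    rw [le_div_iff₀ (hq n), div_mul_eq_mul_div, hRq]
    linarith
  exfalso
  have hRL : ∀ n, R n < L := fun n =>
    (hmono (Nat.lt_succ_self n)).trans_le (hmono.monotone.ge_of_tendsto hL _)
  have hL0 : 0 < L := (hRpos 0).trans (hRL 0)
  have hL1 : Tendsto (fun n => R (n + 1)) atTop (𝓝 L) := hL.comp (tendsto_add_atTop_nat 1)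
  have hSL : Tendsto S atTop (𝓝 L) :=
    tendsto_of_tendsto_of_tendsto_of_le_of_le hL hL1 (fun n => (hlt n).le) hle
  have hφL : Tendsto φ atTop (𝓝 1) := by
    have h1 := hL.div hSL hL0.ne'
    rw [div_self hL0.ne'] at h1
    refine h1.congr fun n => ?_
    rw [Pi.div_apply, ← hRS, mul_div_cancel_left₀ _ (hSpos n).ne']
  have hθL : Tendsto θ atTop (𝓝 1) := by
    have h1 := hSL.div hL1 hL0.ne'
    rw [div_self hL0.ne'] at h1
    refine h1.congr fun n => ?_
    rw [Pi.div_apply, ← hSR, mul_div_cancel_left₀ _ (hRpos (n + 1)).ne']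
  have hb : ∀ n, (b (n + 2) : ℝ) = S (n + 1) * R (n + 1) - (θ n)⁻¹ + θ (n + 1) := fun n => by
    have h1 := hSt (n + 1)
    have h2 := hRq (n + 1)
    have h3 := hSt n
    have h4 := hqr (n + 1)
    rw [ht1] at h2
    rw [hq1] at h4
    have h5 : R (n + 1) * t n = (θ n)⁻¹ * q (n + 1) - q n := by
      have := (hθ0 n).ne'
      rw [← hSR] at h3
      field_simp
      linarith
    have h6 := hRS (n + 1)
    apply mul_right_cancel₀ (hq (n + 1)).ne'
    linear_combination -h4 - h1 - S (n + 1) * h2 - h5 - t n * h6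
  have hc : ∀ n, (c (n + 1) : ℝ) = R (n + 1) * S n + (φ n)⁻¹ - φ (n + 1) := fun n => by
    have h1 := hSt n
    have h2 := hRq (n + 1)
    have h3 := hRq n
    have h4 := htr n
    rw [ht1] at h2
    have h5 : S n * q n = (φ n)⁻¹ * t n + t' n := by
      have := (hφ0 n).ne'
      rw [← hRS] at h3
      field_simp
      linarith
    have h6 := hSR n
    apply mul_right_cancel₀ (ht n).ne'
    linear_combination -h4 - h2 - R (n + 1) * h1 + q n * h6 + h5
  have hbL : Tendsto (fun n => (b (n + 2) : ℝ)) atTop (𝓝 (L * L)) := by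
    have h1 := ((hSL.comp (tendsto_add_atTop_nat 1)).mul hL1).sub (hθL.inv₀ one_ne_zero)
      |>.add (hθL.comp (tendsto_add_atTop_nat 1))
    rw [inv_one, sub_add_cancel] at h1
    exact h1.congr fun n => (hb n).symm
  have hcL : Tendsto (fun n => (c (n + 2) : ℝ)) atTop (𝓝 (L * L)) := by
    have h1 := ((hL1.mul hSL).add (hφL.inv₀ one_ne_zero)).sub
      (hφL.comp (tendsto_add_atTop_nat 1))
    rw [inv_one, add_sub_cancel_right] at h1
    exact (h1.congr fun n => (hc n).symm).comp (tendsto_add_atTop_nat 1)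
  -- convergent integer sequences are eventually constant
  obtain ⟨N, hN⟩ : ∃ N, ∀ n ≥ N, |(b (n + 2) : ℝ) - L * L| < 1 / 4 ∧
      |(c (n + 2) : ℝ) - L * L| < 1 / 4 := by
    have e1 := (Metric.tendsto_nhds.1 hbL) (1 / 4) (by norm_num)
    have e2 := (Metric.tendsto_nhds.1 hcL) (1 / 4) (by norm_num)
    exact eventually_atTop.1 (e1.and e2)
  have hclose : ∀ x y : ℕ, |(x : ℝ) - L * L| < 1 / 4 → |(y : ℝ) - L * L| < 1 / 4 → x = y := by
    intro x y hx hy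
    rw [abs_lt] at hx hy
    have h1 : (x : ℝ) < y + 1 := by linarith
    have h2 : (y : ℝ) < x + 1 := by linarith
    norm_cast at h1 h2
    omega
  obtain ⟨m, hm⟩ : ∃ m : ℕ, m = b (N + 2) := ⟨_, rfl⟩
  have hbm : ∀ n ≥ N, b (n + 2) = m := fun n hn =>
    hm ▸ hclose _ _ (hN n hn).1 (hN N le_rfl).1
  have hcm : ∀ n ≥ N, c (n + 2) = m := fun n hn =>
    hm ▸ hclose _ _ (hN n hn).2 (hN N le_rfl).1
  -- the positive defect `δ` satisfies the recurrence of `t`, so it is not negligible against `t`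
  obtain ⟨δ, hδ⟩ : ∃ δ : ℕ → ℝ, ∀ n, δ n = L * t n - q (n + 1) + q n := ⟨_, fun _ => rfl⟩
  have hδS : ∀ n, δ n = (L - S n) * t n + (1 - θ n) * q n := fun n => by
    rw [hδ]; linear_combination hSt n
  have hδpos : ∀ n, 0 < δ n := fun n => by
    rw [hδS]
    exact add_pos_of_pos_of_nonneg (mul_pos (sub_pos.2 ((hle n).trans_lt (hRL _))) (ht n))
      (mul_nonneg (sub_nonneg.2 (hθ1 n)) (hq n).le)
  have htrec : ∀ n ≥ N, t (n + 2) = m * t (n + 1) + t n := fun n hn => by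
    rw [htr (n + 1), ht1, hcm n hn]
  have hqrec : ∀ n ≥ N, q (n + 2) = m * q (n + 1) + q n := fun n hn => by
    rw [hqr (n + 1), hq1, hbm n hn]
  have hδrec : ∀ n ≥ N, δ (n + 2) = m * δ (n + 1) + δ n := fun n hn => by
    rw [hδ, hδ, hδ]
    linear_combination L * htrec n hn - hqrec (n + 1) (by omega) + hqrec n hn
  obtain ⟨κ, hκ0, hκ1, hκ2⟩ : ∃ κ > 0, κ * t N ≤ δ N ∧ κ * t (N + 1) ≤ δ (N + 1) := by
    refine ⟨min (δ N / t N) (δ (N + 1) / t (N + 1)),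
      lt_min (div_pos (hδpos _) (ht _)) (div_pos (hδpos _) (ht _)), ?_, ?_⟩
    · rw [← le_div_iff₀ (ht _)]; exact min_le_left _ _
    · rw [← le_div_iff₀ (ht _)]; exact min_le_right _ _
  have hκ : ∀ k, κ * t (N + k) ≤ δ (N + k) ∧ κ * t (N + k + 1) ≤ δ (N + k + 1) := by
    intro k
    induction k with
    | zero => exact ⟨hκ1, hκ2⟩
    | succ k ih =>
      refine ⟨ih.2, ?_⟩
      have h1 := htrec (N + k) (by omega)
      have h2 := hδrec (N + k) (by omega)
      have h3 : (0 : ℝ) ≤ m := m.cast_nonneg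
      change κ * t (N + k + 2) ≤ δ (N + k + 2)
      rw [h1, h2]
      nlinarith [mul_le_mul_of_nonneg_left ih.2 h3, ih.1]
  have hzero : Tendsto (fun n => (L - S n) + (1 - θ n) * (2 / R 0)) atTop (𝓝 0) := by
    have h1 := (hSL.const_sub L).add ((hθL.const_sub 1).mul_const (2 / R 0))
    simpa using h1
  obtain ⟨M, hM⟩ := eventually_atTop.1 (hzero.eventually_lt_const hκ0)
  have h1 := hM (N + M) (by omega)
  have h2 := (hκ M).1
  have h3 : q (N + M) ≤ 2 / R 0 * t (N + M) := by
    rw [div_mul_eq_mul_div, le_div_iff₀ (hRpos 0)]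
    have h4 := hRq (N + M)
    have h5 := mul_le_mul_of_nonneg_right (hmono.monotone (Nat.zero_le (N + M))) (hq (N + M)).le
    have h6 := mul_le_mul (hφ1 (N + M)).le (htt (N + M)) (ht0 _) zero_le_one
    linarith
  have h4 := mul_le_mul_of_nonneg_left h3 (sub_nonneg.2 (hθ1 (N + M)))
  have h5 := mul_lt_mul_of_pos_right h1 (ht (N + M))
  rw [hδS] at h2
  linarith

/-! ### Continued fractions with a real tail -/

/-- `cfTail [a₁, …, aₙ] z` is the value of `[0; a₁, …, aₙ + z]`, equal to `z` when `n = 0`: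
the real number with partial quotients `a₁, …, aₙ` and `n`-th Gauss iterate `z`. -/
def cfTail : List ℕ → ℝ → ℝ
  | [], z => z
  | a :: l, z => 1 / ((a : ℝ) + cfTail l z)

lemma cf_eq_cfTail (l : List ℕ) : cf l = cfTail l 0 := by
  induction l with
  | nil => rfl
  | cons a l ih => rw [cf, cfTail, ih]

lemma cfTail_append (l : List ℕ) (a : ℕ) (z : ℝ) :
    cfTail (l ++ [a]) z = cfTail l (1 / (a + z)) := by
  induction l with
  | nil => rfl
  | cons b l ih => rw [List.cons_append, cfTail, cfTail, ih]

lemma cfTail_nonneg (l : List ℕ) {z : ℝ} (hz : 0 ≤ z) : 0 ≤ cfTail l z := by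
  induction l with
  | nil => exact hz
  | cons a l ih => rw [cfTail]; positivity

lemma cfTail_mem (l : List ℕ) (hl : ∀ a ∈ l, 1 ≤ a) {z : ℝ} (hz : 0 < z) (hz1 : z < 1) :
    0 < cfTail l z ∧ cfTail l z < 1 := by
  induction l with
  | nil => exact ⟨hz, hz1⟩
  | cons a l ih =>
    have ih := ih fun x hx => hl x (List.mem_cons_of_mem _ hx)
    have ha : (1 : ℝ) ≤ a := by exact_mod_cast hl a List.mem_cons_self
    rw [cfTail]
    refine ⟨by have := ih.1; positivity, ?_⟩
    rw [div_lt_one (by linarith)]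
    linarith

lemma gaussIter_nat_add (a : ℕ) (y : ℝ) (n : ℕ) : gaussIter (a + y) n = gaussIter y n := by
  induction n with
  | zero => exact Int.fract_natCast_add a y
  | succ n ih => rw [gaussIter, gaussIter, ih]

lemma gaussIter_succ (x : ℝ) (n : ℕ) : gaussIter x (n + 1) = gaussIter (1 / Int.fract x) n := by
  induction n with
  | zero => rfl
  | succ n ih => rw [gaussIter, ih, gaussIter]

lemma gaussIter_zero (n : ℕ) : gaussIter 0 n = 0 := by
  induction n with
  | zero => exact Int.fract_zero
  | succ n ih => rw [gaussIter, ih, div_zero, Int.fract_zero]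

lemma gaussIter_cfTail (l : List ℕ) (hl : ∀ a ∈ l, 1 ≤ a) {z : ℝ} (hz : 0 < z) (hz1 : z < 1) :
    gaussIter (cfTail l z) l.length = z := by
  induction l with
  | nil => exact Int.fract_eq_self.2 ⟨hz.le, hz1⟩
  | cons a l ih =>
    have h1 := cfTail_mem (a :: l) hl hz hz1
    rw [List.length_cons, gaussIter_succ, Int.fract_eq_self.2 ⟨h1.1.le, h1.2⟩, cfTail,
      one_div_one_div, gaussIter_nat_add]
    exact ih fun x hx => hl x (List.mem_cons_of_mem _ hx)

/-- The expansion of `[0; a₁, …, aₙ]` has length at most `n`; the degenerate case `aₙ = 1`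
shortens it. -/
lemma gaussIter_cf (l : List ℕ) (hl : ∀ a ∈ l, 1 ≤ a) : gaussIter (cf l) l.length = 0 := by
  rw [cf_eq_cfTail]
  induction l with
  | nil => exact Int.fract_zero
  | cons a l ih =>
    have ha : (1 : ℝ) ≤ a := by exact_mod_cast hl a List.mem_cons_self
    have h0 := cfTail_nonneg l (le_refl 0)
    have h1 : 0 ≤ cfTail (a :: l) 0 := cfTail_nonneg _ le_rfl
    have h2 : cfTail (a :: l) 0 ≤ 1 := by
      rw [cfTail, div_le_one (by linarith)]; linarith
    rw [List.length_cons, gaussIter_succ]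
    rcases h2.lt_or_eq with h2 | h2
    · rw [Int.fract_eq_self.2 ⟨h1, h2⟩, cfTail, one_div_one_div, gaussIter_nat_add]
      exact ih fun x hx => hl x (List.mem_cons_of_mem _ hx)
    · rw [h2, Int.fract_one, div_zero, gaussIter_zero]

/-- The denominator `qₙ₋₁`, with the convention `q₋₁ = 0`. -/
def qprev (a : ℕ → ℕ) : ℕ → ℕ
  | 0 => 0
  | n + 1 => qden a n

lemma qden_succ (a : ℕ → ℕ) (n : ℕ) :
    qden a (n + 1) = a (n + 1) * qden a n + qprev a n := by
  cases n with
  | zero => simp [qden, qprev]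
  | succ n => rw [qden, qprev]

lemma listOf_succ (a : ℕ → ℕ) (n : ℕ) : listOf a (n + 1) = listOf a n ++ [a (n + 1)] := by
  simp [listOf, List.range_succ]

lemma listOf_length (a : ℕ → ℕ) (n : ℕ) : (listOf a n).length = n := by
  simp [listOf]

lemma one_le_of_mem_listOf {a : ℕ → ℕ} {n : ℕ} (ha : ∀ i < n, 1 ≤ a (i + 1)) :
    ∀ x ∈ listOf a n, 1 ≤ x := by
  intro x hx
  obtain ⟨i, hi, rfl⟩ := List.mem_map.1 hx
  exact ha i (List.mem_range.1 hi)

lemma qden_pos {a : ℕ → ℕ} {n : ℕ} (ha : ∀ i < n, 1 ≤ a (i + 1)) : 0 < qden a n := by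
  induction n with
  | zero => exact one_pos
  | succ n ih =>
    have := Nat.mul_pos (ha n n.lt_succ_self) (ih fun i hi => ha i (hi.trans n.lt_succ_self))
    rw [qden_succ]; omega

/-- The Möbius form of `cfTail`, with unspecified numerators. -/
lemma cfTail_moebius (a : ℕ → ℕ) (n : ℕ) (ha : ∀ i < n, 1 ≤ a (i + 1)) :
    ∃ p p' : ℝ, (∀ z : ℝ, 0 ≤ z →
        cfTail (listOf a n) z = (p + z * p') / (qden a n + z * qprev a n)) ∧
      p' * qden a n - p * qprev a n = (-1) ^ n := by
  induction n with
  | zero =>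
    refine ⟨0, 1, fun z _ => ?_, ?_⟩
    · simp [listOf, cfTail, qden, qprev]
    · simp [qden, qprev]
  | succ n ih =>
    obtain ⟨p, p', h1, h2⟩ := ih fun i hi => ha i (hi.trans n.lt_succ_self)
    refine ⟨a (n + 1) * p + p', p, fun z hz => ?_, ?_⟩
    · have h3 : (1 : ℝ) ≤ a (n + 1) := by exact_mod_cast ha n n.lt_succ_self
      have h4 : (0 : ℝ) < qden a n := by
        exact_mod_cast qden_pos fun i hi => ha i (hi.trans n.lt_succ_self)
      have h5 : (0 : ℝ) ≤ qprev a n := Nat.cast_nonneg _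
      have h6 : (0 : ℝ) < a (n + 1) + z := by linarith
      rw [listOf_succ, cfTail_append, h1 _ (by positivity), qden_succ, qprev]
      push_cast
      have h7 : (0 : ℝ) < qden a n + 1 / (a (n + 1) + z) * qprev a n := by positivity
      have h8 : (0 : ℝ) < a (n + 1) * qden a n + qprev a n + z * qden a n := by positivity
      rw [div_eq_div_iff h7.ne' h8.ne']
      field_simp
      ring
    · rw [qden_succ, qprev, pow_succ, ← h2]
      push_cast
      ring

lemma cfTail_sub (a : ℕ → ℕ) (n : ℕ) (ha : ∀ i < n, 1 ≤ a (i + 1)) {z w : ℝ} (hz : 0 ≤ z)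
    (hw : 0 ≤ w) :
    cfTail (listOf a n) z - cfTail (listOf a n) w = (-1) ^ n * ((z - w) /
      ((qden a n + z * qprev a n) * (qden a n + w * qprev a n))) := by
  obtain ⟨p, p', h1, h2⟩ := cfTail_moebius a n ha
  have h4 : (0 : ℝ) < qden a n := by exact_mod_cast qden_pos ha
  have h5 : (0 : ℝ) ≤ qprev a n := Nat.cast_nonneg _
  have h7 : (0 : ℝ) < qden a n + z * qprev a n := by positivity
  have h8 : (0 : ℝ) < qden a n + w * qprev a n := by positivity
  rw [h1 z hz, h1 w hw, ← h2, div_sub_div _ _ h7.ne' h8.ne', mul_div_assoc']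
  congr 1
  ring

/-! ### One step of the algorithm -/

lemma cfTail_sub_zero (a : ℕ → ℕ) (n : ℕ) (ha : ∀ i < n, 1 ≤ a (i + 1)) {z : ℝ} (hz : 0 ≤ z) :
    cfTail (listOf a n) z - cf (listOf a n) = (-1) ^ n * (z /
      ((qden a n + z * qprev a n) * qden a n)) := by
  rw [cf_eq_cfTail, cfTail_sub a n ha hz le_rfl, sub_zero, zero_mul, add_zero]

/-- If the tails of `α - [0;b₁,…,bₙ]` and `α - [0;c₁,…,cₙ]` are `φ` and `ψ`, then
`α - [0;b₁,…,bₙ₊₁]` still begins with `c₁, …, cₙ`: replacing `[0;b₁,…,bₙ]` by `[0;b₁,…,bₙ₊₁]`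
moves the difference towards `[0;c₁,…,cₙ]` without crossing it. The new tail is `1 / X`, and the two
closing identities are the double computations of the errors before and after the move. -/
lemma exists_c_tail {b c : ℕ → ℕ} {n : ℕ} (hb : ∀ i, 1 ≤ b (i + 1))
    (hc : ∀ i < n, 1 ≤ c (i + 1)) {α φ ψ θ : ℝ} (hφ0 : 0 < φ) (hφ1 : φ < 1) (hψ0 : 0 < ψ)
    (hφ : α - cf (listOf b n) = cfTail (listOf c n) φ)
    (hψ : α - cf (listOf c n) = cfTail (listOf b n) ψ)
    (hθ : θ = b (n + 1) - 1 / ψ) (hθ0 : 0 < θ) :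
    ∃ X : ℝ, 1 < X ∧ α - cf (listOf b (n + 1)) = cfTail (listOf c n) (1 / X) ∧
      (qden b n : ℝ) * (qden b (n + 1) - θ * qden b n) * φ
        = qden c n * (qden c n + φ * qprev c n) ∧
      θ * qden c n * (X * qden c n + qprev c n)
        = qden b (n + 1) * (qden b (n + 1) - θ * qden b n) := by
  have hb' : ∀ i < n, 1 ≤ b (i + 1) := fun i _ => hb i
  have e1 := cfTail_sub_zero b n hb' hψ0.le
  have e2 := cfTail_sub_zero c n hc hφ0.le
  have hB1 : (1 : ℝ) ≤ b (n + 1) := by exact_mod_cast hb n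
  have hQ : (qden b (n + 1) : ℝ) = b (n + 1) * qden b n + qprev b n := by
    rw [qden_succ]; push_cast; rfl
  have hq : (0 : ℝ) < qden b n := by exact_mod_cast qden_pos hb'
  have hq' : (0 : ℝ) ≤ qprev b n := Nat.cast_nonneg _
  have ht : (0 : ℝ) < qden c n := by exact_mod_cast qden_pos hc
  have ht' : (0 : ℝ) ≤ qprev c n := Nat.cast_nonneg _
  have e3 := cfTail_sub b n hb' hψ0.le (w := 1 / b (n + 1)) (by positivity)
  have e4 : cf (listOf b (n + 1)) = cfTail (listOf b n) (1 / b (n + 1)) := by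
    rw [cf_eq_cfTail, listOf_succ, cfTail_append, add_zero]
  have hs : ((-1 : ℝ) ^ n) ≠ 0 := pow_ne_zero _ (by norm_num)
  have hDeq : φ / ((qden c n + φ * qprev c n) * qden c n)
      = ψ / ((qden b n + ψ * qprev b n) * qden b n) := by
    apply mul_left_cancel₀ hs
    rw [← e1, ← e2]
    linarith
  have hEX : ∀ X : ℝ, 1 < X → cfTail (listOf c n) (1 / X) - cf (listOf c n)
      = (-1) ^ n * (1 / (qden c n * (X * qden c n + qprev c n))) := by
    intro X hX
    have hX0 : 0 < X := by linarith
    rw [cfTail_sub_zero c n hc (by positivity)]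
    congr 1
    field_simp
  generalize (qden b n : ℝ) = q at *
  generalize (qden b (n + 1) : ℝ) = Q at *
  generalize (qden c n : ℝ) = t at *
  generalize (qprev b n : ℝ) = q' at *
  generalize (qprev c n : ℝ) = t' at *
  generalize (b (n + 1) : ℝ) = B at *
  have hQpos : 0 < Q := by rw [hQ]; positivity
  have hF : Q - θ * q = (q + ψ * q') / ψ := by
    rw [hQ, hθ]; field_simp; ring
  have hFpos : 0 < Q - θ * q := by rw [hF]; positivity
  have hE : (ψ - 1 / B) / ((q + ψ * q') * (q + 1 / B * q')) = θ / (Q * (Q - θ * q)) := by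
    have h1 : q + 1 / B * q' = Q / B := by rw [hQ]; field_simp
    have h2 : ψ - 1 / B = ψ * θ / B := by rw [hθ]; field_simp
    have h3 : (0 : ℝ) < B := by linarith
    have h4 : 0 < q + ψ * q' := by positivity
    rw [h1, h2, hF]
    field_simp
  have hD : q * (Q - θ * q) * φ = t * (t + φ * t') := by
    have h4 : 0 < q + ψ * q' := by positivity
    have h5 : 0 < t + φ * t' := by positivity
    rw [hF]
    rw [div_eq_div_iff (by positivity) (by positivity)] at hDeq
    field_simp
    linarith
  -- the choice of `X` is forced by the identity claimed last
  obtain ⟨X, hX⟩ : ∃ X : ℝ, θ * t * (X * t + t') = Q * (Q - θ * q) := by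
    refine ⟨(Q * (Q - θ * q) / (θ * t) - t') / t, ?_⟩
    field_simp
    ring
  have hXφ : 1 < X * φ := by
    have h1 : θ * t * (X * t + t') * φ * q = Q * (t * (t + φ * t')) := by
      rw [hX]; linear_combination Q * hD
    have h2 : θ * q * (X * t + t') * φ = Q * (t + φ * t') := by
      apply mul_left_cancel₀ ht.ne'; linear_combination h1
    have h3 : 0 < t + φ * t' := by positivity
    have h4 : θ * q * (t + φ * t') < θ * q * ((X * t + t') * φ) := by
      have := mul_pos hFpos h3
      nlinarith
    have h5 := lt_of_mul_lt_mul_left h4 (by positivity)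
    have h6 : 1 * t < X * φ * t := by linarith
    exact lt_of_mul_lt_mul_right h6 ht.le
  have hX1 : 1 < X := by
    by_contra! hcon
    have : X * φ ≤ 1 * φ := mul_le_mul_of_nonneg_right hcon hφ0.le
    linarith
  refine ⟨X, hX1, ?_, hD, hX⟩
  have h1 := hEX X hX1
  have h2 : 1 / (t * (X * t + t')) = θ / (Q * (Q - θ * q)) := by
    have : 0 < X * t + t' := by positivity
    rw [div_eq_div_iff (by positivity) (by positivity)]
    linarith
  rw [h2, ← hE, ← e3] at h1
  rw [e4]
  linarith

/-- The counterpart of `exists_c_tail` for the digits `b`. Here the inequality `hlt`, saying that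
the error is less than the length of the cylinder of `b₁, …, bₙ`, has to be supplied. -/
lemma exists_b_tail {b c : ℕ → ℕ} {n : ℕ} (hb : ∀ i < n, 1 ≤ b (i + 1))
    (hc : ∀ i < n, 1 ≤ c (i + 1)) {α φ : ℝ} (hφ0 : 0 < φ)
    (hφ : α - cf (listOf b n) = cfTail (listOf c n) φ)
    (hlt : φ * qden b n * (qden b n + qprev b n) < (qden c n + φ * qprev c n) * qden c n) :
    ∃ ψ : ℝ, 0 < ψ ∧ ψ < 1 ∧ α - cf (listOf c n) = cfTail (listOf b n) ψ := by
  have e1 := cfTail_sub_zero c n hc hφ0.le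
  have hEX := fun (ψ : ℝ) (hψ : 0 ≤ ψ) => cfTail_sub_zero b n hb hψ
  have hq : (0 : ℝ) < qden b n := by exact_mod_cast qden_pos hb
  have hq' : (0 : ℝ) ≤ qprev b n := Nat.cast_nonneg _
  have ht : (0 : ℝ) < qden c n := by exact_mod_cast qden_pos hc
  have ht' : (0 : ℝ) ≤ qprev c n := Nat.cast_nonneg _
  generalize (qden b n : ℝ) = q at *
  generalize (qden c n : ℝ) = t at *
  generalize (qprev b n : ℝ) = q' at *
  generalize (qprev c n : ℝ) = t' at *
  obtain ⟨d, hd⟩ : ∃ d, d = (t + φ * t') * t - φ * q * q' := ⟨_, rfl⟩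
  have hden : φ * q * q < d := by rw [hd]; linarith
  have hpos : 0 < φ * q * q := by positivity
  have hden0 := hpos.trans hden
  refine ⟨φ * q * q / d, div_pos hpos hden0, (div_lt_one hden0).2 hden, ?_⟩
  have h1 := hEX _ (div_pos hpos hden0).le
  have h2 : φ * q * q / d / ((q + φ * q * q / d * q') * q) = φ / ((t + φ * t') * t) := by
    have h3 : (t + φ * t') * t = d + φ * q * q' := by rw [hd]; ring
    have h4 : q + φ * q * q / d * q' = q * (d + φ * q * q') / d := by
      field_simp
    have h5 : 0 < d + φ * q * q' := by positivity
    rw [h4, h3]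
    field_simp
  rw [h2, ← e1] at h1
  linarith

/-- The inequality required by `exists_b_tail`, propagated together with `S² ≥ 2`, where
`S = (Q - θ q) / t`. -/
lemma cylinder_ineq_step {q Q t T θ φ : ℝ} (hQ : 0 < Q) (ht : 0 < t)
    (hφ0 : 0 < φ) (hφ1 : φ < 1) (hθ0 : 0 < θ) (hθ1 : θ ≤ 1)
    (hS : 2 * t ^ 2 ≤ (Q - θ * q) ^ 2)
    (hE : θ * t * (T + φ * t) = Q * (Q - θ * q)) :
    φ * Q * (Q + q) < (T + φ * t) * T ∧ 2 * (φ * Q) ^ 2 ≤ (T + φ * t) ^ 2 := by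
  obtain ⟨R, hR⟩ : ∃ R : ℝ, T + φ * t = R * Q := ⟨(T + φ * t) / Q, by field_simp⟩
  have hRt : θ * (R * t) = Q - θ * q := by
    rw [hR] at hE
    apply mul_left_cancel₀ hQ.ne'; linear_combination hE
  have h1 : 2 ≤ (θ * R) ^ 2 := by
    rw [← hRt] at hS
    have : 2 * t ^ 2 ≤ (θ * R) ^ 2 * t ^ 2 := by linarith
    exact le_of_mul_le_mul_right this (by positivity)
  have h2 : 2 ≤ R ^ 2 := by
    have : θ ^ 2 ≤ 1 := by nlinarith
    nlinarith [sq_nonneg R]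
  have h3 : φ * (θ + 1) < θ * R ^ 2 := by
    have h5 : θ * (φ * (θ + 1)) < θ * (θ * R ^ 2) := by
      have h6 : φ * (θ + 1) < 1 * (θ + 1) := mul_lt_mul_of_pos_right hφ1 (by linarith)
      have h7 : θ * (φ * (θ + 1)) < θ * (1 * (θ + 1)) := mul_lt_mul_of_pos_left h6 hθ0
      nlinarith
    exact lt_of_mul_lt_mul_left h5 hθ0.le
  constructor
  · have hT : T = R * Q - φ * t := by linarith
    rw [hR, hT]
    have h4 : θ * (φ * Q * (Q + q)) < θ * (R * Q * (R * Q - φ * t)) := by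
      have h5 := mul_lt_mul_of_pos_right h3 (mul_pos hQ hQ)
      have h6 : θ * (R * Q * (R * Q - φ * t)) = θ * R ^ 2 * (Q * Q) - φ * Q * (Q - θ * q) := by
        rw [← hRt]; ring
      rw [h6]
      linarith
    exact lt_of_mul_lt_mul_left h4 hθ0.le
  · rw [hR]
    have : φ ^ 2 ≤ 1 := by nlinarith
    nlinarith [sq_nonneg Q, mul_nonneg (sub_nonneg.2 this) (sq_nonneg Q),
      mul_le_mul_of_nonneg_right h2 (sq_nonneg Q)]

/-- The first step, where the bound `S² ≥ 2` is not yet available; integrality of `c` replaces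
it. -/
lemma cylinder_ineq_one {b c : ℕ} {θ φ : ℝ} (hb : 2 ≤ b) (hφ0 : 0 < φ) (hφ1 : φ < 1)
    (hθ0 : 0 < θ) (hθ1 : θ ≤ 1) (hE : θ * (c + φ) = b * (b - θ)) :
    φ * b * (b + 1) < (c + φ) * c ∧ 2 * (φ * b) ^ 2 ≤ (c + φ) ^ 2 := by
  have hb2 : (2 : ℝ) ≤ b := by exact_mod_cast hb
  have h1 : (b : ℝ) * (b - 1) ≤ c + φ := by
    have h2 : θ * (b * (b - 1)) ≤ θ * (c + φ) := by
      rw [hE]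
      nlinarith [mul_nonneg (mul_nonneg (sub_nonneg.2 hθ1) (by linarith : (0 : ℝ) ≤ b))
        (by linarith : (0 : ℝ) ≤ b)]
    exact le_of_mul_le_mul_left h2 hθ0
  have h3 : b * b ≤ c + b := by
    have : (b : ℝ) * b < c + b + 1 := by linarith
    exact Nat.lt_succ_iff.1 (by exact_mod_cast this)
  have h4 : (b : ℝ) * b ≤ c + b := by exact_mod_cast h3
  rcases hb.eq_or_lt with rfl | hb3
  · have hc2 : 2 ≤ c := by omega
    rcases hc2.eq_or_lt with rfl | hc3
    · push_cast
      constructor <;> nlinarith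
    · have hc3 : (3 : ℝ) ≤ c := by exact_mod_cast hc3
      push_cast
      constructor <;> nlinarith
  · have hb3 : (3 : ℝ) ≤ b := by exact_mod_cast hb3
    have h5 : 2 * (b : ℝ) ≤ c := by nlinarith
    have h6 : φ * b ≤ b := by nlinarith
    have h7 : 0 ≤ φ * b := by positivity
    constructor
    · nlinarith
    · nlinarith

/-! ### The orbit of the algorithm -/

lemma bList_succ (α : ℝ) (n : ℕ) : bList α (n + 1) = bList α n ++ [shulgaB α (n + 1)] := by
  simp [bList, shulgaB, shulgaList]

lemma cList_succ (α : ℝ) (n : ℕ) : cList α (n + 1) = cList α n ++ [shulgaC α (n + 1)] := by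
  simp [cList, shulgaC, shulgaList]

lemma bList_eq (α : ℝ) (n : ℕ) : bList α n = listOf (shulgaB α) n := by
  induction n with
  | zero => rfl
  | succ n ih => rw [bList_succ, listOf_succ, ih]

lemma cList_eq (α : ℝ) (n : ℕ) : cList α n = listOf (shulgaC α) n := by
  induction n with
  | zero => rfl
  | succ n ih => rw [cList_succ, listOf_succ, ih]

lemma shulgaB_succ (α : ℝ) (n : ℕ) :
    shulgaB α (n + 1) = ⌊1 / gaussIter (α - cf (listOf (shulgaC α) n)) n⌋₊ + 1 := by
  rw [← cList_eq]
  simp [shulgaB, shulgaList, pq, cList]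

lemma shulgaC_succ (α : ℝ) (n : ℕ) :
    shulgaC α (n + 1) = ⌊1 / gaussIter (α - cf (listOf (shulgaB α) (n + 1))) n⌋₊ := by
  rw [← bList_eq]
  simp [shulgaC, shulgaList, pq, bList]

/-- The tail of `α - [0;b₁,…,bₙ]` after the digits `c₁, …, cₙ`. -/
def phi (α : ℝ) (n : ℕ) : ℝ := gaussIter (α - cf (listOf (shulgaB α) n)) n

/-- The tail of `α - [0;c₁,…,cₙ]` after the digits `b₁, …, bₙ`. -/
def psi (α : ℝ) (n : ℕ) : ℝ := gaussIter (α - cf (listOf (shulgaC α) n)) n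

/-- The rounding error `θₙ₊₁ = bₙ₊₁ - 1/ψₙ ∈ (0,1]` in the choice of `bₙ₊₁`. -/
def theta (α : ℝ) (n : ℕ) : ℝ := shulgaB α (n + 1) - 1 / psi α n

/-- After `n` steps both differences begin with the digits already found. The last field is
`S² ≥ 2` for `S = (tₙ + φ tₙ₋₁) / (φ qₙ)`. -/
structure Invariant (α : ℝ) (n : ℕ) : Prop where
  c_pos : ∀ i < n, 1 ≤ shulgaC α (i + 1)
  phi_pos : 0 < phi α n
  phi_lt : phi α n < 1
  psi_pos : 0 < psi α n
  psi_lt : psi α n < 1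
  phi_eq : α - cf (listOf (shulgaB α) n) = cfTail (listOf (shulgaC α) n) (phi α n)
  psi_eq : α - cf (listOf (shulgaC α) n) = cfTail (listOf (shulgaB α) n) (psi α n)
  large : n ≠ 0 → 2 * (phi α n * qden (shulgaB α) n) ^ 2
    ≤ (qden (shulgaC α) n + phi α n * qprev (shulgaC α) n) ^ 2

lemma one_le_shulgaB (α : ℝ) (i : ℕ) : 1 ≤ shulgaB α (i + 1) := by
  rw [shulgaB_succ]; omega

lemma psi_ne_zero {α : ℝ} (h : ∀ n : ℕ, shulgaDefined α n) (n : ℕ) : psi α n ≠ 0 := by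
  have := (h (n + 1) n n.lt_succ_self).1
  rwa [pqDefined, cList_eq] at this

lemma invariant_zero {α : ℝ} (hα : α ∈ Set.Icc (0 : ℝ) 1) (h : ∀ n : ℕ, shulgaDefined α n) :
    Invariant α 0 := by
  have h0 : Int.fract α ≠ 0 := by simpa [psi, listOf, cf, gaussIter] using psi_ne_zero h 0
  have h1 : 0 < α := lt_of_le_of_ne hα.1 fun he => h0 (by rw [← he, Int.fract_zero])
  have h2 : α < 1 := lt_of_le_of_ne hα.2 fun he => h0 (by rw [he, Int.fract_one])
  have e1 : phi α 0 = α := by simp [phi, listOf, cf, gaussIter, Int.fract_eq_self, h1.le, h2]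
  have e2 : psi α 0 = α := by simp [psi, listOf, cf, gaussIter, Int.fract_eq_self, h1.le, h2]
  refine ⟨fun i hi => absurd hi (Nat.not_lt_zero i), ?_, ?_, ?_, ?_, ?_, ?_,
    fun hn => absurd rfl hn⟩
  · rwa [e1]
  · rwa [e1]
  · rwa [e2]
  · rwa [e2]
  · rw [e1]; simp [listOf, cf, cfTail]
  · rw [e2]; simp [listOf, cf, cfTail]

lemma theta_mem {α : ℝ} {n : ℕ} (I : Invariant α n) : 0 < theta α n ∧ theta α n ≤ 1 := by
  have h0 : 0 ≤ 1 / psi α n := by have := I.psi_pos; positivity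
  have h1 := Nat.floor_le h0
  have h2 := Nat.lt_floor_add_one (1 / psi α n)
  rw [theta, shulgaB_succ, ← psi]
  push_cast
  constructor <;> linarith

lemma invariant_succ {α : ℝ} (h : ∀ n : ℕ, shulgaDefined α n) {n : ℕ} (I : Invariant α n) :
    Invariant α (n + 1) ∧
      (qden (shulgaB α) n : ℝ) *
          (qden (shulgaB α) (n + 1) - theta α n * qden (shulgaB α) n) * phi α n
        = qden (shulgaC α) n * (qden (shulgaC α) n + phi α n * qprev (shulgaC α) n) ∧
      theta α n * qden (shulgaC α) n *
          (qden (shulgaC α) (n + 1) + phi α (n + 1) * qden (shulgaC α) n)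
        = qden (shulgaB α) (n + 1) *
          (qden (shulgaB α) (n + 1) - theta α n * qden (shulgaB α) n) := by
  obtain ⟨hθ0, hθ1⟩ := theta_mem I
  obtain ⟨X, hX, hy, hD, hE⟩ := exists_c_tail (θ := theta α n) (one_le_shulgaB α) I.c_pos I.phi_pos I.phi_lt
    I.psi_pos I.phi_eq I.psi_eq rfl hθ0
  have hX0 : 0 < X := by linarith
  -- `1 / X` is the Gauss iterate defining `cₙ₊₁`
  have hom : gaussIter (α - cf (listOf (shulgaB α) (n + 1))) n = 1 / X := by
    have h1 := gaussIter_cfTail (listOf (shulgaC α) n) (one_le_of_mem_listOf I.c_pos)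
      (one_div_pos.2 hX0) ((div_lt_one hX0).2 hX)
    rwa [listOf_length, ← hy] at h1
  have hC : shulgaC α (n + 1) = ⌊X⌋₊ := by rw [shulgaC_succ, hom, one_div_one_div]
  have hphi : phi α (n + 1) = Int.fract X := by
    rw [phi, gaussIter, hom, one_div_one_div]
  have hXsum : (shulgaC α (n + 1) : ℝ) + phi α (n + 1) = X := by
    rw [hC, hphi, natCast_floor_eq_intCast_floor hX0.le, Int.floor_add_fract]
  have hcpos : ∀ i < n + 1, 1 ≤ shulgaC α (i + 1) := by
    intro i hi
    rcases Nat.lt_succ_iff_lt_or_eq.1 hi with hi | rfl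
    · exact I.c_pos i hi
    · rw [hC]; exact Nat.le_floor (by simpa using hX.le)
  have hphieq : α - cf (listOf (shulgaB α) (n + 1))
      = cfTail (listOf (shulgaC α) (n + 1)) (phi α (n + 1)) := by
    rw [listOf_succ (shulgaC α), cfTail_append, hXsum, hy]
  have hphi1 : phi α (n + 1) < 1 := by rw [hphi]; exact Int.fract_lt_one X
  -- otherwise `α` is the sum of the two convergents and the algorithm stops
  have hphi0 : 0 < phi α (n + 1) := by
    refine lt_of_le_of_ne (by rw [hphi]; exact Int.fract_nonneg X) fun h0 => ?_
    rw [← h0, ← cf_eq_cfTail] at hphieq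
    have h1 : α - cf (listOf (shulgaC α) (n + 1)) = cf (listOf (shulgaB α) (n + 1)) := by linarith
    have h2 := gaussIter_cf (listOf (shulgaB α) (n + 1))
      (one_le_of_mem_listOf fun i _ => one_le_shulgaB α i)
    rw [listOf_length, ← h1] at h2
    exact psi_ne_zero h (n + 1) h2
  have hT : (qden (shulgaC α) (n + 1) : ℝ) + phi α (n + 1) * qden (shulgaC α) n
      = X * qden (shulgaC α) n + qprev (shulgaC α) n := by
    rw [← hXsum, qden_succ]; push_cast; ring
  rw [← hT] at hE
  have hq : (0 : ℝ) < qden (shulgaB α) n := by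
    exact_mod_cast qden_pos fun i _ => one_le_shulgaB α i
  have hQ : (0 : ℝ) < qden (shulgaB α) (n + 1) := by
    exact_mod_cast qden_pos fun i _ => one_le_shulgaB α i
  have ht : (0 : ℝ) < qden (shulgaC α) n := by exact_mod_cast qden_pos I.c_pos
  have ht' : (0 : ℝ) ≤ qprev (shulgaC α) n := Nat.cast_nonneg _
  have hφ := I.phi_pos
  have key : phi α (n + 1) * qden (shulgaB α) (n + 1) *
        (qden (shulgaB α) (n + 1) + qden (shulgaB α) n)
      < (qden (shulgaC α) (n + 1) + phi α (n + 1) * qden (shulgaC α) n) *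
        qden (shulgaC α) (n + 1) ∧
      2 * (phi α (n + 1) * qden (shulgaB α) (n + 1)) ^ 2
      ≤ (qden (shulgaC α) (n + 1) + phi α (n + 1) * qden (shulgaC α) n) ^ 2 := by
    by_cases hn : n = 0
    · subst hn
      have hb2 : 2 ≤ shulgaB α (0 + 1) := by
        rw [shulgaB_succ, ← psi]
        have : 1 ≤ ⌊1 / psi α 0⌋₊ := Nat.le_floor (by
          rw [Nat.cast_one, le_div_iff₀ I.psi_pos]; linarith [I.psi_lt])
        omega
      have hE' : theta α 0 * (shulgaC α (0 + 1) + phi α (0 + 1))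
          = shulgaB α (0 + 1) * (shulgaB α (0 + 1) - theta α 0) := by
        simpa [qden] using hE
      simpa [qden] using cylinder_ineq_one hb2 hphi0 hphi1 hθ0 hθ1 hE'
    · refine cylinder_ineq_step hQ ht hphi0 hphi1 hθ0 hθ1 ?_ hE
      have h1 := mul_le_mul_of_nonneg_right (I.large hn)
        (sq_nonneg (qden (shulgaC α) n : ℝ))
      rw [← mul_pow, mul_comm (_ + _) (qden (shulgaC α) n : ℝ), ← hD] at h1
      have h2 : 0 < (phi α n * qden (shulgaB α) n) ^ 2 := by positivity
      apply le_of_mul_le_mul_left _ h2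
      linarith
  obtain ⟨ψ, hψ0, hψ1, hψ⟩ := exists_b_tail (fun i _ => one_le_shulgaB α i) hcpos hphi0 hphieq
    key.1
  have hpsi : psi α (n + 1) = ψ := by
    have h1 := gaussIter_cfTail (listOf (shulgaB α) (n + 1))
      (one_le_of_mem_listOf fun i _ => one_le_shulgaB α i) hψ0 hψ1
    rwa [listOf_length, ← hψ] at h1
  exact ⟨⟨hcpos, hphi0, hphi1, hpsi ▸ hψ0, hpsi ▸ hψ1, hphieq, hpsi ▸ hψ, fun _ => key.2⟩, hD, hE⟩

lemma invariant_all {α : ℝ} (hα : α ∈ Set.Icc (0 : ℝ) 1) (h : ∀ n : ℕ, shulgaDefined α n)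
    (n : ℕ) : Invariant α n := by
  induction n with
  | zero => exact invariant_zero hα h
  | succ n ih => exact (invariant_succ h ih).1

/-- if Shulga's algorithm takes infinitely many steps then
`tₙ/qₙ → ∞`. -/
theorem stmt18 (α : ℝ) (hα : α ∈ Set.Icc (0 : ℝ) 1)
    (h : ∀ n : ℕ, shulgaDefined α n) :
    Tendsto (fun n => (qden (shulgaC α) n : ℝ) / (qden (shulgaB α) n : ℝ))
      atTop atTop := by
  have I := invariant_all hα h
  have hc : ∀ i, 1 ≤ shulgaC α (i + 1) := fun i => (I (i + 1)).c_pos i i.lt_succ_self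
  refine tendsto_ratio_of_relations (shulgaB α) (shulgaC α) _
    (fun n => (qprev (shulgaB α) n : ℝ)) _ (fun n => (qprev (shulgaC α) n : ℝ)) (phi α) (theta α)
    (fun n => ?_) (fun n => rfl) (fun n => ?_) (fun n => ?_) (fun n => rfl)
    (fun n => Nat.cast_nonneg _) (fun n => ?_) (fun n => ?_) (fun n => (I n).phi_pos)
    (fun n => (I n).phi_lt) (fun n => (theta_mem (I n)).1) (fun n => (theta_mem (I n)).2)
    (fun n => (invariant_succ h (I n)).2.1) (fun n => (invariant_succ h (I n)).2.2)
  · exact_mod_cast qden_pos fun i _ => one_le_shulgaB α i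
  · exact_mod_cast qden_succ _ n
  · exact_mod_cast qden_pos fun i _ => hc i
  · exact_mod_cast qden_succ _ n
  · cases n with
    | zero => simp [qprev]
    | succ n =>
      have h1 := Nat.mul_le_mul_right (qden (shulgaC α) n) (hc n)
      rw [one_mul] at h1
      change (qden (shulgaC α) n : ℝ) ≤ qden (shulgaC α) (n + 1)
      exact_mod_cast h1.trans (by rw [qden_succ]; exact Nat.le_add_right _ _)

end ShulgaPaper
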